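/- Let p ≥ 28 be a real number and set x⋆ = p − 1. Then for every x in the interval [x⋆ − x⋆^{2/3}, x⋆ + x⋆^{2/3}], one has (1/4) · x⋆^{p−1} e^{−x⋆} · exp(−(x − x⋆)²/(2x⋆)) ≤ x^{p−1} e^{−x} ≤ 4 · x⋆^{p−1} e^{−x⋆} · exp(−(x − x⋆)²/(2x⋆)). -/

import Mathlib

/-!
Put `n = p - 1` and `x = n (1 + u)`. Then
`x ^ n * exp (-x) = n ^ n * exp (-n) * exp (-n u² / 2) * exp (n R(u))`, where
`R(u) = log (1 + u) - u + u² / 2` is of order `u³`. The window `|x - n| ≤ n ^ (2 / 3)` is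
`|u| ≤ n ^ (-1 / 3)`, which is exactly where `n |u|³ ≤ 1`, so that `n R(u)` stays bounded.
-/

lemma abs_log_one_add_sub_sum_range_le {u : ℝ} (hu : |u| < 1) (n : ℕ) :
    |Real.log (1 + u) - ∑ j ∈ Finset.range (n + 1), (-1) ^ (j + 1) * u ^ j / j| ≤
      |u| ^ (n + 1) * (1 - |u|)⁻¹ / (n + 1) := by
  have h_pos : 0 < 1 + u := by linarith [neg_lt_of_abs_lt hu]
  have h := Complex.norm_log_sub_logTaylor_le n (z := u) (by simpa using hu)
  rw [Complex.logTaylor] at h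
  rw [← Real.norm_eq_abs, ← Complex.norm_real]
  simpa [Complex.ofReal_log h_pos.le] using h

/-- The remainder of `log (1 + u)` after its quadratic Taylor polynomial at `u = 0`; multiplied
by `x⋆` it is the logarithm of the ratio between the Gamma integrand and its Gaussian
approximation at `x = x⋆ (1 + u)`. -/
noncomputable def logRemainder (u : ℝ) : ℝ := Real.log (1 + u) - u + u ^ 2 / 2

lemma abs_logRemainder_le {u : ℝ} (hu : |u| < 1) :
    |logRemainder u| ≤ |u| ^ 3 / (3 * (1 - |u|)) := by
  calc |logRemainder u|
      = |Real.log (1 + u) - ∑ j ∈ Finset.range (2 + 1), (-1) ^ (j + 1) * u ^ j / j| := by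
        congr 1
        simp only [logRemainder, Finset.sum_range_succ, Finset.sum_range_zero]
        push_cast
        ring
    _ ≤ |u| ^ (2 + 1) * (1 - |u|)⁻¹ / ((2 : ℕ) + 1) := abs_log_one_add_sub_sum_range_le hu 2
    _ = |u| ^ 3 / (3 * (1 - |u|)) := by
        rw [← div_eq_mul_inv, div_div, mul_comm (1 - |u|)]
        norm_num

lemma abs_mul_logRemainder_le {n u : ℝ} (hn : 1 < n) (hu : |u| ≤ n ^ (-1 / 3 : ℝ)) :
    |n * logRemainder u| ≤ 1 / (3 * (1 - n ^ (-1 / 3 : ℝ))) := by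
  have hn_pos : 0 < n := by linarith
  set a := n ^ (-1 / 3 : ℝ) with ha
  have ha_lt : a < 1 := Real.rpow_lt_one_of_one_lt_of_neg hn (by norm_num)
  have ha_cube : n * a ^ 3 = 1 := by
    rw [ha, ← Real.rpow_mul_natCast hn_pos.le]
    norm_num [Real.rpow_neg_one, hn_pos.ne']
  calc |n * logRemainder u|
      = n * |logRemainder u| := by rw [abs_mul, abs_of_pos hn_pos]
    _ ≤ n * (|u| ^ 3 / (3 * (1 - |u|))) := by
        gcongr
        exact abs_logRemainder_le (hu.trans_lt ha_lt)
    _ ≤ n * (a ^ 3 / (3 * (1 - a))) := by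
        have : 0 < 1 - a := sub_pos.2 ha_lt
        gcongr
    _ = 1 / (3 * (1 - a)) := by rw [← mul_div_assoc, ha_cube]

lemma one_div_three_mul_one_sub_rpow_le_one {n : ℝ} (hn : 27 / 8 ≤ n) :
    1 / (3 * (1 - n ^ (-1 / 3 : ℝ))) ≤ 1 := by
  have h_rpow : n ^ (-1 / 3 : ℝ) ≤ 2 / 3 := by
    calc n ^ (-1 / 3 : ℝ) ≤ ((3 / 2) ^ (3 : ℝ)) ^ (-1 / 3 : ℝ) :=
          Real.rpow_le_rpow_of_nonpos (by norm_num) (by norm_num; exact hn) (by norm_num)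
      _ = 2 / 3 := by rw [← Real.rpow_mul (by norm_num)]; norm_num [Real.rpow_neg_one]
  rw [div_le_one₀] <;> linarith

lemma abs_sub_div_self_le_rpow {n x : ℝ} (hn : 0 < n) (hx : |x - n| ≤ n ^ (2 / 3 : ℝ)) :
    |(x - n) / n| ≤ n ^ (-1 / 3 : ℝ) := by
  calc |(x - n) / n| = |x - n| / n := by rw [abs_div, abs_of_pos hn]
    _ ≤ n ^ (2 / 3 : ℝ) / n := by gcongr
    _ = n ^ (-1 / 3 : ℝ) := by rw [← Real.rpow_sub_one hn.ne']; norm_num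

lemma rpow_mul_exp_neg_eq {n x : ℝ} (hn : 0 < n) (hx : 0 < x) :
    x ^ n * Real.exp (-x) =
      n ^ n * Real.exp (-n) * Real.exp (-(x - n) ^ 2 / (2 * n)) *
        Real.exp (n * logRemainder ((x - n) / n)) := by
  have h_log : Real.log (1 + (x - n) / n) = Real.log x - Real.log n := by
    rw [← Real.log_div hx.ne' hn.ne']
    congr 1
    field_simp
    ring
  rw [Real.rpow_def_of_pos hx, Real.rpow_def_of_pos hn, logRemainder, h_log]
  simp only [← Real.exp_add]
  congr 1
  field_simp
  ring

lemma one_div_le_exp_and_exp_le {E c C : ℝ} (hE : |E| ≤ c) (hC : Real.exp c ≤ C) :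
    1 / C ≤ Real.exp E ∧ Real.exp E ≤ C := by
  obtain ⟨h_lower, h_upper⟩ := abs_le.1 hE
  constructor
  · calc 1 / C ≤ 1 / Real.exp c := one_div_le_one_div_of_le (Real.exp_pos c) hC
      _ = Real.exp (-c) := by rw [Real.exp_neg, one_div]
      _ ≤ Real.exp E := Real.exp_le_exp.2 h_lower
  · exact (Real.exp_le_exp.2 h_upper).trans hC

theorem subgaussian_bounds_gamma_integrand_general {p x C : ℝ} (hp : 2 < p)
    (hC : Real.exp (1 / (3 * (1 - (p - 1) ^ (-1 / 3 : ℝ)))) ≤ C)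
    (hx : x ∈ Set.Icc ((p - 1) - (p - 1) ^ ((2 : ℝ) / 3))
        ((p - 1) + (p - 1) ^ ((2 : ℝ) / 3))) :
    (1 / C) * (p - 1) ^ (p - 1) * Real.exp (-(p - 1)) *
        Real.exp (-(x - (p - 1)) ^ 2 / (2 * (p - 1))) ≤ x ^ (p - 1) * Real.exp (-x) ∧
    x ^ (p - 1) * Real.exp (-x) ≤
      C * (p - 1) ^ (p - 1) * Real.exp (-(p - 1)) *
        Real.exp (-(x - (p - 1)) ^ 2 / (2 * (p - 1))) := by
  have hn : 1 < p - 1 := by linarith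
  have hn_pos : 0 < p - 1 := by linarith
  have h_window : |x - (p - 1)| ≤ (p - 1) ^ (2 / 3 : ℝ) := by
    rwa [abs_sub_comm, Set.mem_Icc_iff_abs_le]
  have hx_pos : 0 < x := by
    have h_lt : (p - 1) ^ (2 / 3 : ℝ) < p - 1 :=
      Real.rpow_lt_self_of_one_lt hn (by norm_num)
    linarith [hx.1]
  obtain ⟨h_lower, h_upper⟩ := one_div_le_exp_and_exp_le
    (abs_mul_logRemainder_le hn (abs_sub_div_self_le_rpow hn_pos h_window)) hC
  rw [rpow_mul_exp_neg_eq hn_pos hx_pos]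
  constructor
  · calc _ = (p - 1) ^ (p - 1) * Real.exp (-(p - 1)) *
          Real.exp (-(x - (p - 1)) ^ 2 / (2 * (p - 1))) * (1 / C) := by ring
      _ ≤ _ := by gcongr
  · calc _ ≤ (p - 1) ^ (p - 1) * Real.exp (-(p - 1)) *
          Real.exp (-(x - (p - 1)) ^ 2 / (2 * (p - 1))) * C := by gcongr
      _ = _ := by ring

/-- **Subgaussian bounds for the integrand of the lower incomplete Gamma function near
its maximizer.** For `p ≥ 28` and `x⋆ = p - 1`, for every
`x ∈ [x⋆ - x⋆^(2/3), x⋆ + x⋆^(2/3)]`,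
`(1/4)·x⋆^(p-1) e^(-x⋆) exp(-(x-x⋆)²/(2x⋆)) ≤ x^(p-1) e^(-x)
  ≤ 4·x⋆^(p-1) e^(-x⋆) exp(-(x-x⋆)²/(2x⋆))`. -/
theorem subgaussian_bounds_gamma_integrand (p : ℝ) (hp : 28 ≤ p) (x : ℝ)
    (hx : x ∈ Set.Icc ((p - 1) - (p - 1) ^ ((2 : ℝ) / 3))
        ((p - 1) + (p - 1) ^ ((2 : ℝ) / 3))) :
    (1 / 4) * (p - 1) ^ (p - 1) * Real.exp (-(p - 1)) *
        Real.exp (-(x - (p - 1)) ^ 2 / (2 * (p - 1))) ≤ x ^ (p - 1) * Real.exp (-x) ∧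
    x ^ (p - 1) * Real.exp (-x) ≤
      4 * (p - 1) ^ (p - 1) * Real.exp (-(p - 1)) *
        Real.exp (-(x - (p - 1)) ^ 2 / (2 * (p - 1))) :=
  subgaussian_bounds_gamma_integrand_general (by linarith) ((Real.exp_le_exp.2
    (one_div_three_mul_one_sub_rpow_le_one (by linarith))).trans
      (by linarith [Real.exp_one_lt_d9])) hx
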